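/- arXiv:2404.07914 — 2 statements merged into one kernel-verified Lean document; each statement's English description precedes it below -/
import Mathlib

section
/- For every integer m ≥ 1, the integral ∫_{-π}^{π} (1 − x·cos θ)·cos(mθ)/(x² − 2x·cos θ + 1) dθ equals −π·x^{−m} for every real x > 1, and equals π·x^m for every real x with 0 ≤ x < 1. -/
/-!
The factor `(1 - x cos θ) / (x² - 2 x cos θ + 1)` equals `1/2` plus half the Poisson kernel
`P_x(θ) = (1 - x²) / (x² - 2 x cos θ + 1)`. The constant contributes nothing, since `cos (m θ)`
integrates to `0` over a period when `m ≥ 1`. For `0 ≤ x < 1` the Poisson integral formula for the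
harmonic function `Re (z ^ m)`, evaluated at the point `x`, gives `∫ P_x(θ) cos (m θ) = 2 π x ^ m`.
For `x > 1` the identity `P_x = -P_{1/x}` reduces the claim to the previous case.
-/

/-- The Poisson integral formula for `z ↦ Re (z ^ m)` on the unit disk at a real point. -/
lemma integral_poisson_cos (m : ℕ) (x : ℝ) (h0 : 0 ≤ x) (h1 : x < 1) :
    (∫ θ in (-Real.pi)..Real.pi,
      (1 - x ^ 2) / (x ^ 2 - 2 * x * Real.cos θ + 1) * Real.cos (m * θ))
      = 2 * Real.pi * x ^ m := by
  have hf : InnerProductSpace.HarmonicOnNhd (fun z : ℂ => (z ^ m).re)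
      (Metric.closedBall 0 1) := fun z _ =>
    AnalyticAt.harmonicAt_re (f := fun z : ℂ => z ^ m) (by fun_prop)
  have hw : (x : ℂ) ∈ Metric.ball (0 : ℂ) 1 := by
    simpa [abs_of_nonneg h0] using h1
  have key := hf.circleAverage_poissonKernel_smul hw
  rw [Real.circleAverage_eq_integral_add (-Real.pi)] at key
  have hint := intervalIntegral.integral_comp_add_right (a := 0) (b := 2 * Real.pi)
    (fun θ => (poissonKernel 0 (x : ℂ) • fun z : ℂ => (z ^ m).re) (circleMap 0 1 θ)) (-Real.pi)
  rw [hint, show 0 + -Real.pi = -Real.pi by ring, show 2 * Real.pi + -Real.pi = Real.pi by ring,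
    ← Complex.ofReal_pow, Complex.ofReal_re, smul_eq_mul] at key
  rw [← key, mul_inv_cancel_left₀ (by positivity)]
  refine intervalIntegral.integral_congr fun θ _ => ?_
  have hn : ‖Complex.exp (θ * Complex.I) - x‖ ^ 2 = x ^ 2 - 2 * x * Real.cos θ + 1 := by
    rw [← Complex.normSq_eq_norm_sq, Complex.normSq_apply]
    simp only [Complex.sub_re, Complex.sub_im, Complex.exp_ofReal_mul_I_re,
      Complex.exp_ofReal_mul_I_im, Complex.ofReal_re, Complex.ofReal_im]
    linear_combination Real.sin_sq_add_cos_sq θ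
  have hp : (Complex.exp (θ * Complex.I) ^ m).re = Real.cos (m * θ) := by
    rw [← Complex.exp_nat_mul, ← mul_assoc]
    exact_mod_cast Complex.exp_ofReal_mul_I_re (m * θ)
  simp [poissonKernel_def, circleMap, hn, hp, Complex.norm_exp_ofReal_mul_I]

lemma denom_pos (x : ℝ) (h0 : 0 ≤ x) (h1 : x ≠ 1) (θ : ℝ) :
    0 < x ^ 2 - 2 * x * Real.cos θ + 1 := by
  have := sq_pos_of_ne_zero (sub_ne_zero.mpr h1)
  nlinarith [mul_le_mul_of_nonneg_left (Real.cos_le_one θ) h0]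

lemma integral_cos_nat_mul (m : ℕ) (hm : 1 ≤ m) :
    ∫ θ in (-Real.pi)..Real.pi, Real.cos (m * θ) = 0 := by
  have : (m : ℝ) ≠ 0 := by positivity
  rw [intervalIntegral.integral_comp_mul_left (fun t => Real.cos t) this]
  simp [Real.sin_nat_mul_pi]

/-- Only the Poisson-kernel part of the integrand contributes. -/
lemma integral_eq_half_poisson (m : ℕ) (hm : 1 ≤ m) (x : ℝ) (h0 : 0 ≤ x) (h1 : x ≠ 1) :
    (∫ θ in (-Real.pi)..Real.pi,
        ((1 - x * Real.cos θ) * Real.cos (m * θ)) / (x ^ 2 - 2 * x * Real.cos θ + 1))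
      = 2⁻¹ * ∫ θ in (-Real.pi)..Real.pi,
        (1 - x ^ 2) / (x ^ 2 - 2 * x * Real.cos θ + 1) * Real.cos (m * θ) := by
  have hne : ∀ θ : ℝ, x ^ 2 - 2 * x * Real.cos θ + 1 ≠ 0 := fun θ => (denom_pos x h0 h1 θ).ne'
  have hsplit : ∀ θ : ℝ,
      ((1 - x * Real.cos θ) * Real.cos (m * θ)) / (x ^ 2 - 2 * x * Real.cos θ + 1)
      = 2⁻¹ * Real.cos (m * θ) +
        2⁻¹ * ((1 - x ^ 2) / (x ^ 2 - 2 * x * Real.cos θ + 1) * Real.cos (m * θ)) := by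
    intro θ
    have := hne θ
    generalize hD : x ^ 2 - 2 * x * Real.cos θ + 1 = D at this ⊢
    field_simp
    linear_combination Real.cos (m * θ) * hD
  simp_rw [hsplit]
  rw [intervalIntegral.integral_add, intervalIntegral.integral_const_mul,
    intervalIntegral.integral_const_mul, integral_cos_nat_mul m hm, mul_zero, zero_add]
  · exact Continuous.intervalIntegrable (by fun_prop) _ _
  · exact Continuous.intervalIntegrable (by fun_prop (disch := exact hne _)) _ _

/-- For every integer `m ≥ 1`, the integral
`∫_{-π}^{π} (1 − x cos θ) cos(mθ)/(x² − 2x cos θ + 1) dθ` equals `−π x^{−m}` for every real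
`x > 1`, and equals `π x^m` for every real `x` with `0 ≤ x < 1`. -/
theorem stmt2 (m : ℕ) (hm : 1 ≤ m) :
    (∀ x : ℝ, 1 < x →
      (∫ θ in (-Real.pi)..Real.pi,
        ((1 - x * Real.cos θ) * Real.cos (m * θ)) / (x ^ 2 - 2 * x * Real.cos θ + 1))
      = -Real.pi * x ^ (-(m : ℤ))) ∧
    (∀ x : ℝ, 0 ≤ x → x < 1 →
      (∫ θ in (-Real.pi)..Real.pi,
        ((1 - x * Real.cos θ) * Real.cos (m * θ)) / (x ^ 2 - 2 * x * Real.cos θ + 1))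
      = Real.pi * x ^ m) := by
  refine ⟨fun x hx => ?_, fun x h0 h1 => ?_⟩
  · have hx0 : 0 < x := by linarith
    rw [integral_eq_half_poisson m hm x hx0.le hx.ne.symm]
    -- The kernel at `x` is minus the kernel at `x⁻¹`, a point of the open unit disk.
    have hflip : ∀ θ : ℝ,
        (1 - x ^ 2) / (x ^ 2 - 2 * x * Real.cos θ + 1) * Real.cos (m * θ)
        = -((1 - x⁻¹ ^ 2) / (x⁻¹ ^ 2 - 2 * x⁻¹ * Real.cos θ + 1) * Real.cos (m * θ)) := by
      intro θ
      have hd := (denom_pos x hx0.le hx.ne' θ).ne'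
      have hd' : x⁻¹ ^ 2 - 2 * x⁻¹ * Real.cos θ + 1
          = (x ^ 2 - 2 * x * Real.cos θ + 1) / x ^ 2 := by
        field_simp
        ring
      rw [hd']
      field_simp
      ring
    simp_rw [hflip]
    rw [intervalIntegral.integral_neg,
      integral_poisson_cos m x⁻¹ (inv_nonneg.mpr hx0.le) (inv_lt_one_of_one_lt₀ hx),
      zpow_neg, zpow_natCast, inv_pow]
    ring
  · rw [integral_eq_half_poisson m hm x h0 h1.ne, integral_poisson_cos m x h0 h1]
    ring
end

section
/- Let 0 < b < a, c = √(a² − b²), and ρ_fil > a. Define ξ₀ > 0 by cosh ξ₀ = a/c and ξ_fil > 0 by cosh ξ_fil = ρ_fil/c. Then for every integer m ≥ 1, (e^{mξ₀}/π)·(b/a)·J(m, ρ_fil/a, b/a) = e^{−mξ_fil} − e^{m(2ξ₀ − ξ_fil)}, where J(m,x,y) = ∫_{-π}^{π} (1 − x·cos θ)·cos(mθ) / (y² + (1−y²)·cos²θ − 2x·cos θ + x²) dθ. -/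
/-!
Dividing lengths by `c` turns `a, b, ρfil` into `cosh ξ₀, sinh ξ₀, cosh ξfil`, and the denominator of
the integrand factors, up to a constant, as
`(cosh (ξfil - ξ₀) - cos θ) * (cosh (ξfil + ξ₀) - cos θ)`. Partial fractions (`partial_fractions`)
then write the integrand as half the difference of the two Poisson kernels
`sinh u / (cosh u - cos θ)` at `u = ξfil + ξ₀` and `u = ξfil - ξ₀`. Both parameters are positive
because `ρfil > a`, and the `m`-th cosine coefficient of such a kernel is `2π e^{-mu}`
(`integral_poisson_cos`), by the Poisson integral formula for `z ↦ z ^ m` on the unit disc.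
-/

lemma cosh_sub_cos_pos {u : ℝ} (hu : 0 < u) (θ : ℝ) : 0 < Real.cosh u - Real.cos θ := by
  have := Real.one_lt_cosh.2 hu.ne'
  linarith [Real.cos_le_one θ]

lemma continuous_poisson_cos {u : ℝ} (hu : 0 < u) (m : ℕ) :
    Continuous fun θ : ℝ => Real.sinh u / (Real.cosh u - Real.cos θ) * Real.cos (m * θ) :=
  (continuous_const.div (by fun_prop) fun θ => (cosh_sub_cos_pos hu θ).ne').mul (by fun_prop)

/-- On the unit circle, the Poisson kernel at the real point `e^{-u}` in hyperbolic form. -/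
lemma poissonKernel_circleMap {u : ℝ} (hu : 0 < u) (θ : ℝ) :
    poissonKernel 0 (Real.exp (-u) : ℂ) (circleMap 0 1 θ)
      = Real.sinh u / (Real.cosh u - Real.cos θ) := by
  have hpos := cosh_sub_cos_pos hu θ
  have hnorm : ‖circleMap 0 1 θ - (Real.exp (-u) : ℂ)‖ ^ 2
      = 2 * Real.exp (-u) * (Real.cosh u - Real.cos θ) := by
    have hz : circleMap 0 1 θ = (Real.cos θ : ℂ) + (Real.sin θ : ℂ) * Complex.I := by
      simp [circleMap, Complex.exp_mul_I]
    rw [hz, ← Complex.normSq_eq_norm_sq, Complex.normSq_apply]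
    simp only [Complex.sub_re, Complex.add_re, Complex.mul_re, Complex.I_re, Complex.I_im,
      Complex.ofReal_re, Complex.ofReal_im, Complex.sub_im, Complex.add_im, Complex.mul_im]
    have h1 : Real.exp (-u) * Real.exp u = 1 := by rw [← Real.exp_add]; simp
    rw [Real.cosh_eq]
    linear_combination Real.sin_sq_add_cos_sq θ - h1
  have hnum : 1 - Real.exp (-u) ^ 2 = 2 * Real.exp (-u) * Real.sinh u := by
    have h1 : Real.exp (-u) * Real.exp u = 1 := by rw [← Real.exp_add]; simp
    rw [Real.sinh_eq]
    linear_combination -h1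
  rw [poissonKernel_def, sub_zero, sub_zero, hnorm, norm_circleMap_zero, Complex.norm_real,
    Real.norm_eq_abs, abs_one, one_pow, sq_abs, hnum]
  have := Real.exp_pos (-u)
  field_simp

/-- Cosine coefficients of the Poisson kernel: the real part of the Poisson integral formula for
`z ↦ z ^ m` at the point `e^{-u}`. -/
lemma integral_poisson_cos_s18 {u : ℝ} (hu : 0 < u) (m : ℕ) :
    ∫ θ in (-Real.pi)..Real.pi, Real.sinh u / (Real.cosh u - Real.cos θ) * Real.cos (m * θ)
      = 2 * Real.pi * Real.exp (-(m * u)) := by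
  have hf : DiffContOnCl ℂ (fun z : ℂ => z ^ m) (Metric.ball 0 1) :=
    Differentiable.diffContOnCl (by fun_prop)
  have hw : (Real.exp (-u) : ℂ) ∈ Metric.ball (0 : ℂ) 1 := by
    rw [mem_ball_zero_iff, Complex.norm_real, Real.norm_eq_abs, abs_of_pos (Real.exp_pos _)]
    simpa using hu
  have key := hf.circleAverage_poissonKernel_smul hw
  rw [Real.circleAverage_def] at key
  have hpt : ∀ θ : ℝ, (poissonKernel 0 (Real.exp (-u) : ℂ) • fun z : ℂ => z ^ m) (circleMap 0 1 θ)
      = (Real.sinh u / (Real.cosh u - Real.cos θ)) • (circleMap 0 1 θ) ^ m := fun θ => by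
    rw [Pi.smul_apply', poissonKernel_circleMap hu]
  simp_rw [hpt] at key
  have hcont : Continuous fun θ : ℝ =>
      (Real.sinh u / (Real.cosh u - Real.cos θ)) • (circleMap 0 1 θ) ^ m :=
    (continuous_const.div (by fun_prop) fun θ => (cosh_sub_cos_pos hu θ).ne').smul
      ((continuous_circleMap 0 1).pow m)
  have hre := Complex.reCLM.intervalIntegral_comp_comm
    (hcont.intervalIntegrable (μ := MeasureTheory.volume) 0 (2 * Real.pi))
  have hpt2 : ∀ θ : ℝ, Complex.reCLM
      ((Real.sinh u / (Real.cosh u - Real.cos θ)) • (circleMap 0 1 θ) ^ m)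
      = Real.sinh u / (Real.cosh u - Real.cos θ) * Real.cos (m * θ) := fun θ => by
    have hz : (circleMap 0 1 θ) ^ m = Complex.exp ((m * θ : ℝ) * Complex.I) := by
      rw [circleMap_zero, Complex.ofReal_one, one_mul, ← Complex.exp_nat_mul]
      push_cast
      ring_nf
    rw [map_smul, hz, Complex.reCLM_apply, Complex.exp_ofReal_mul_I_re, smul_eq_mul]
  simp_rw [hpt2] at hre
  have hper : Function.Periodic (fun θ : ℝ =>
      Real.sinh u / (Real.cosh u - Real.cos θ) * Real.cos (m * θ)) (2 * Real.pi) := fun θ => by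
    have : (m : ℝ) * (θ + 2 * Real.pi) = m * θ + m * (2 * Real.pi) := by ring
    simp only [Real.cos_add_two_pi, this, Real.cos_add_nat_mul_two_pi]
  have hshift := hper.intervalIntegral_add_eq (-Real.pi) 0
  rw [show -Real.pi + 2 * Real.pi = Real.pi by ring, zero_add] at hshift
  rw [hshift, hre]
  have hpi := Real.pi_pos
  rw [inv_smul_eq_iff₀ (by positivity)] at key
  rw [key, map_smul, Complex.reCLM_apply, ← Complex.ofReal_pow, Complex.ofReal_re,
    ← Real.exp_nat_mul, smul_eq_mul]
  ring_nf

/-- Partial fractions in `t = cos θ`, for `s = ξ₀` and `f = ξfil`; the left-hand denominator is the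
product of the two on the right. -/
lemma partial_fractions {s f t : ℝ} (hp : Real.cosh (f - s) - t ≠ 0)
    (hq : Real.cosh (f + s) - t ≠ 0) :
    Real.sinh s * (Real.cosh s - Real.cosh f * t) /
        (Real.sinh s ^ 2 + t ^ 2 - 2 * Real.cosh s * Real.cosh f * t + Real.cosh f ^ 2)
      = (Real.sinh (f + s) / (Real.cosh (f + s) - t)
          - Real.sinh (f - s) / (Real.cosh (f - s) - t)) / 2 := by
  have hs := Real.cosh_sq s
  have hf := Real.cosh_sq f
  have hfac : Real.sinh s ^ 2 + t ^ 2 - 2 * Real.cosh s * Real.cosh f * t + Real.cosh f ^ 2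
      = (Real.cosh (f + s) - t) * (Real.cosh (f - s) - t) := by
    rw [Real.cosh_add, Real.cosh_sub]
    linear_combination (-(Real.cosh f ^ 2)) * hs - Real.sinh s ^ 2 * hf
  rw [hfac, div_sub_div _ _ hq hp, div_div, div_eq_div_iff (mul_ne_zero hq hp)
    (mul_ne_zero (mul_ne_zero hq hp) two_ne_zero)]
  have hnum : Real.sinh s * (Real.cosh s - Real.cosh f * t) * 2
      = Real.sinh (f + s) * (Real.cosh (f - s) - t)
        - (Real.cosh (f + s) - t) * Real.sinh (f - s) := by
    rw [Real.cosh_add, Real.cosh_sub, Real.sinh_add, Real.sinh_sub]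
    linear_combination (-2 * Real.sinh s * Real.cosh s) * hf
  linear_combination ((Real.cosh (f + s) - t) * (Real.cosh (f - s) - t)) * hnum

/-- Let `0 < b < a`, `c = √(a² − b²)`, `ρ_fil > a`. Define `ξ₀ > 0` by
`cosh ξ₀ = a/c` and `ξ_fil > 0` by `cosh ξ_fil = ρ_fil/c`. Then for every integer `m ≥ 1`,
`(e^{mξ₀}/π)(b/a) J(m, ρ_fil/a, b/a) = e^{−mξ_fil} − e^{m(2ξ₀ − ξ_fil)}`, where
`J(m,x,y) = ∫_{-π}^{π} (1 − x cos θ) cos(mθ)/(y² + (1−y²) cos²θ − 2x cos θ + x²) dθ`. -/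
theorem stmt18 (a b c ρfil ξ₀ ξfil : ℝ)
    (hb : 0 < b) (hba : b < a) (hc : c = Real.sqrt (a ^ 2 - b ^ 2)) (hfil : a < ρfil)
    (hξ₀pos : 0 < ξ₀) (hξ₀ : Real.cosh ξ₀ = a / c)
    (hξfpos : 0 < ξfil) (hξf : Real.cosh ξfil = ρfil / c)
    (m : ℕ) (hm : 1 ≤ m) :
    (Real.exp (m * ξ₀) / Real.pi) * (b / a) *
      (∫ θ in (-Real.pi)..Real.pi,
        ((1 - (ρfil / a) * Real.cos θ) * Real.cos (m * θ)) /
          ((b / a) ^ 2 + (1 - (b / a) ^ 2) * Real.cos θ ^ 2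
            - 2 * (ρfil / a) * Real.cos θ + (ρfil / a) ^ 2))
    = Real.exp (-(m * ξfil)) - Real.exp (m * (2 * ξ₀ - ξfil)) := by
  have ha : 0 < a := hb.trans hba
  have hcpos : 0 < c := hc ▸ Real.sqrt_pos.2 (by nlinarith)
  have hc2 : c ^ 2 = a ^ 2 - b ^ 2 := by rw [hc, Real.sq_sqrt (by nlinarith)]
  have hac : a = c * Real.cosh ξ₀ := by rw [hξ₀]; field_simp
  have hρc : ρfil = c * Real.cosh ξfil := by rw [hξf]; field_simp
  have hbc : b = c * Real.sinh ξ₀ := by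
    have hsinh := Real.sinh_pos_iff.2 hξ₀pos
    refine (sq_eq_sq₀ hb.le (by positivity)).1 ?_
    have := Real.cosh_sq ξ₀
    rw [hac] at hc2
    linear_combination hc2 + c ^ 2 * this
  have hlt : ξ₀ < ξfil := by
    have h : Real.cosh ξ₀ < Real.cosh ξfil := by rw [hξ₀, hξf]; gcongr
    rwa [Real.cosh_lt_cosh, abs_of_pos hξ₀pos, abs_of_pos hξfpos] at h
  have hsub : 0 < ξfil - ξ₀ := sub_pos.2 hlt
  have hadd : 0 < ξfil + ξ₀ := by linarith
  have hC := Real.cosh_pos ξ₀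
  have hint : ∀ θ : ℝ, b / a * (((1 - (ρfil / a) * Real.cos θ) * Real.cos (m * θ)) /
      ((b / a) ^ 2 + (1 - (b / a) ^ 2) * Real.cos θ ^ 2
        - 2 * (ρfil / a) * Real.cos θ + (ρfil / a) ^ 2))
      = (Real.sinh (ξfil + ξ₀) / (Real.cosh (ξfil + ξ₀) - Real.cos θ) * Real.cos (m * θ)
        - Real.sinh (ξfil - ξ₀) / (Real.cosh (ξfil - ξ₀) - Real.cos θ) * Real.cos (m * θ)) / 2 := by
    intro θ
    have hpf := partial_fractions (cosh_sub_cos_pos hsub θ).ne' (cosh_sub_cos_pos hadd θ).ne'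
    have hba' : b / a = Real.sinh ξ₀ / Real.cosh ξ₀ := by
      rw [hac, hbc, mul_div_mul_left _ _ hcpos.ne']
    have hρa : ρfil / a = Real.cosh ξfil / Real.cosh ξ₀ := by
      rw [hac, hρc, mul_div_mul_left _ _ hcpos.ne']
    have hden : (b / a) ^ 2 + (1 - (b / a) ^ 2) * Real.cos θ ^ 2
        - 2 * (ρfil / a) * Real.cos θ + (ρfil / a) ^ 2
        = (Real.sinh ξ₀ ^ 2 + Real.cos θ ^ 2 - 2 * Real.cosh ξ₀ * Real.cosh ξfil * Real.cos θ
          + Real.cosh ξfil ^ 2) / Real.cosh ξ₀ ^ 2 := by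
      rw [hba', hρa]
      field_simp
      linear_combination Real.cos θ ^ 2 * Real.cosh_sq ξ₀
    rw [← sub_mul, mul_div_right_comm (_ - _) (Real.cos (m * θ)) 2, ← hpf, hden, hba', hρa, div_div_eq_mul_div,
      ← mul_div_assoc, div_mul_eq_mul_div]
    field_simp
  rw [mul_assoc, ← intervalIntegral.integral_const_mul]
  simp_rw [hint]
  rw [intervalIntegral.integral_div, intervalIntegral.integral_sub
    ((continuous_poisson_cos hadd m).intervalIntegrable _ _)
    ((continuous_poisson_cos hsub m).intervalIntegrable _ _),
    integral_poisson_cos_s18 hadd, integral_poisson_cos_s18 hsub]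
  have h1 : Real.exp (-(m * ξfil)) = Real.exp (m * ξ₀) * Real.exp (-(m * (ξfil + ξ₀))) := by
    rw [← Real.exp_add]; ring_nf
  have h2 : Real.exp (m * (2 * ξ₀ - ξfil))
      = Real.exp (m * ξ₀) * Real.exp (-(m * (ξfil - ξ₀))) := by
    rw [← Real.exp_add]; ring_nf
  rw [h1, h2]
  have hpi := Real.pi_pos
  field_simp
end
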